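/- arXiv:2507.19139 — 2 statements merged into one kernel-verified Lean document; each statement's English description precedes it below -/
import Mathlib

section
/- Let S = {s1, …, sk} be a set of pairwise matching strings of length n over Σ and d a nonnegative integer. There exists a string s* of length n over Σ with ∂S(s_i, s*) ≤ d for every i ∈ {1, …, k} if and only if there exists a binary string h* of length n−1 with ∂Ham(h_{s1,s_i}, h*) ≤ d for every i ∈ {1, …, k}. -/
/-!
Strings of length `n` over an alphabet `α` are modelled as functions `ℕ → α`,
where only the values at positions `0, …, n-1` (0-indexed) are relevant.
A swap at (0-indexed) position `p` exchanges the letters at positions `p` and `p+1`.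
A swap permutation is modelled as a `Finset ℕ` of swap positions, pairwise at
distance ≥ 2 (equivalently: containing no two consecutive positions).
-/

universe u

variable {α : Type u}

/-- `P` is a swap permutation for strings of length `n`: every swap position is in range
and no two swaps overlap (positions are pairwise at distance ≥ 2). -/
def IsSwapSet (n : ℕ) (P : Finset ℕ) : Prop :=
  (∀ p ∈ P, p + 1 < n) ∧ (∀ p ∈ P, p + 1 ∉ P)

/-- Apply a set of pairwise disjoint swaps to a string. -/
def applySwaps (P : Finset ℕ) (s : ℕ → α) : ℕ → α := fun i =>
  if i ∈ P then s (i + 1)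
  else if 0 < i ∧ i - 1 ∈ P then s (i - 1)
  else s i

/-- The swap permutation `P` transforms `s1` into `s2` (as length-`n` strings). -/
def Transforms (n : ℕ) (P : Finset ℕ) (s1 s2 : ℕ → α) : Prop :=
  IsSwapSet n P ∧ ∀ i < n, applySwaps P s1 i = s2 i

/-- Two length-`n` strings are matching if some swap permutation transforms one
into the other. -/
def SwMatching (n : ℕ) (s1 s2 : ℕ → α) : Prop :=
  ∃ P : Finset ℕ, Transforms n P s1 s2

/-- `P` is a *valid* swap permutation transforming `s1` into `s2`:
it transforms `s1` into `s2` and never swaps two identical letters. -/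
def ValidTransform (n : ℕ) (P : Finset ℕ) (s1 s2 : ℕ → α) : Prop :=
  Transforms n P s1 s2 ∧ ∀ p ∈ P, s1 p ≠ s1 (p + 1)

/-- Hamming distance of two length-`n` strings. -/
noncomputable def hamDist {β : Type*} (n : ℕ) (s t : ℕ → β) : ℕ :=
  letI : DecidablePred (fun i => s i ≠ t i) := fun _ => Classical.propDecidable _
  ((Finset.range n).filter (fun i => s i ≠ t i)).card

/-- Swap distance: the number of swaps of the valid swap permutation transforming
`s1` into `s2` (unique when it exists), and `⊤` if the strings are not matching. -/
noncomputable def swapDist (n : ℕ) (s1 s2 : ℕ → α) : ℕ∞ :=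
  sInf {m : ℕ∞ | ∃ P : Finset ℕ, ValidTransform n P s1 s2 ∧ m = (P.card : ℕ∞)}

/-- Swap+Hamming distance: minimum over all length-`n` strings `t` of
`∂S(s1,t) + ∂Ham(t,s2)`. -/
noncomputable def shDist (n : ℕ) (s1 s2 : ℕ → α) : ℕ∞ :=
  ⨅ t : ℕ → α, swapDist n s1 t + (hamDist n t s2 : ℕ∞)

/-- Number of occurrences of the letter `x` at positions `a ≤ i < b` of the string `s`. -/
noncomputable def countIn {β : Type*} (s : ℕ → β) (a b : ℕ) (x : β) : ℕ :=
  letI : DecidablePred (fun i => s i = x) := fun _ => Classical.propDecidable _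
  ((Finset.Ico a b).filter (fun i => s i = x)).card

/-- Greedy (left-to-right) swap set between two strings: position `p` is greedily
swapped iff `s1[p] = s2[p+1]`, `s1[p+1] = s2[p]`, `s1[p] ≠ s1[p+1]`, and position
`p-1` was not swapped. -/
def greedyMem (s1 s2 : ℕ → α) : ℕ → Prop
  | 0 => s1 0 = s2 1 ∧ s1 1 = s2 0 ∧ s1 0 ≠ s1 1
  | p + 1 => (s1 (p + 1) = s2 (p + 2) ∧ s1 (p + 2) = s2 (p + 1) ∧ s1 (p + 1) ≠ s1 (p + 2))
      ∧ ¬ greedyMem s1 s2 p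

/-- The greedy swap set `G(s1,s2)` restricted to the valid positions `0, …, n-2`. -/
noncomputable def greedySet (n : ℕ) (s1 s2 : ℕ → α) : Finset ℕ :=
  letI : DecidablePred (greedyMem s1 s2) := fun _ => Classical.propDecidable _
  (Finset.range (n - 1)).filter (greedyMem s1 s2)

/-- `SW(S, t, i)`: the set of indices `j` such that `t` and `s j` have a greedy swap
at position `i`. -/
noncomputable def SW (n : ℕ) {k : ℕ} (s : Fin k → ℕ → α) (t : ℕ → α) (i : ℕ) :
    Finset (Fin k) :=
  letI : DecidablePred (fun j : Fin k => i ∈ greedySet n t (s j)) :=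
    fun _ => Classical.propDecidable _
  Finset.univ.filter (fun j => i ∈ greedySet n t (s j))

/-- The swap `(p, p+1)` is necessary for the input string `s i` if every string
matching all strings of `S` has a swap at position `p` in its valid swap
permutation towards `s i`. -/
def NecessarySwap (n : ℕ) {k : ℕ} (s : Fin k → ℕ → α) (i : Fin k) (p : ℕ) : Prop :=
  ∀ t : ℕ → α, (∀ j, SwMatching n t (s j)) →
    ∀ P : Finset ℕ, ValidTransform n P t (s i) → p ∈ P

/-- Lexicographic strict order on length-`n` strings. -/
def LexLt {β : Type*} [LinearOrder β] (n : ℕ) (s t : ℕ → β) : Prop :=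
  ∃ i < n, s i < t i ∧ ∀ j < i, s j = t j

/-!
A swap at `p` is the only swap that changes the multiset of the first `p + 1` letters, and a valid
one does change it. Hence the valid swap permutation from `r` to `t` can be read off from the
prefix multisets of `r` and `t`, and wherever the swap strings of `s` and `t` relative to `r`
differ, every swap permutation from `s` to `t` has a swap. This bounds the Hamming distance by the
swap distance.

It also shows that the valid swap permutations from `r` to two matching strings never swap at
adjacent positions, so all swaps from `r` to pairwise matching strings commute. Given a binary
center `h`, performing those of them which `h` selects turns `r` into a center `t`; commuting
swaps compose by symmetric difference, so the swaps from a string `s` of the family to `t` are the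
positions where the swap string of `s` disagrees with the selection.
-/

section

open scoped symmDiff

variable {n d : ℕ} {P P' Q U : Finset ℕ} {r s t : ℕ → α}

lemma hamDist_le_card {β : Type*} {x y : ℕ → β} (h : ∀ i < n, x i ≠ y i → i ∈ Q) :
    hamDist n x y ≤ Q.card := by
  refine Finset.card_le_card fun i hi => ?_
  simp only [Finset.mem_filter, Finset.mem_range] at hi
  exact h i hi.1 hi.2

lemma card_le_hamDist {β : Type*} {x y : ℕ → β} (h : ∀ i ∈ Q, i < n ∧ x i ≠ y i) :
    Q.card ≤ hamDist n x y := by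
  refine Finset.card_le_card fun i hi => ?_
  simpa only [Finset.mem_filter, Finset.mem_range] using h i hi

lemma swapDist_le_iff :
    swapDist n s t ≤ (d : ℕ∞) ↔ ∃ Q, ValidTransform n Q s t ∧ Q.card ≤ d := by
  constructor
  · intro h
    have hne : {m : ℕ∞ | ∃ Q : Finset ℕ, ValidTransform n Q s t ∧ m = Q.card}.Nonempty := by
      by_contra hempty
      simp [swapDist, Set.not_nonempty_iff_eq_empty.1 hempty] at h
    obtain ⟨Q, hQ, hcard⟩ := csInf_mem hne
    exact ⟨Q, hQ, Nat.cast_le.1 (hcard.symm.trans_le h)⟩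
  · rintro ⟨Q, hQ, hcard⟩
    exact (sInf_le ⟨Q, hQ, rfl⟩ : swapDist n s t ≤ Q.card).trans (Nat.cast_le.2 hcard)

lemma applySwaps_of_mem {p : ℕ} (hp : p ∈ P) : applySwaps P s p = s (p + 1) :=
  if_pos hp

lemma applySwaps_succ_of_mem {p : ℕ} (hp : p ∈ P) (hp' : p + 1 ∉ P) :
    applySwaps P s (p + 1) = s p := by
  simp [applySwaps, hp, hp']

lemma applySwaps_of_notMem {i : ℕ} (hi : i ∉ P) (hpred : ∀ p ∈ P, p + 1 ≠ i) :
    applySwaps P s i = s i := by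
  have : ¬ (0 < i ∧ i - 1 ∈ P) := fun ⟨hpos, h⟩ => hpred _ h (Nat.sub_add_cancel hpos)
  simp only [applySwaps, hi, this, if_false]

lemma IsSwapSet.applySwaps_congr (hP : IsSwapSet n P) (hst : ∀ i < n, s i = t i) {i : ℕ}
    (hi : i < n) : applySwaps P s i = applySwaps P t i := by
  unfold applySwaps
  split_ifs with h h'
  · exact hst _ (hP.1 i h)
  · exact hst _ (by omega)
  · exact hst i hi

lemma applySwaps_ne_applySwaps_succ {p : ℕ} (hne : s p ≠ s (p + 1)) (hsucc : p + 1 ∉ P)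
    (hpred : ∀ q ∈ P, q + 1 ≠ p) : applySwaps P s p ≠ applySwaps P s (p + 1) := by
  by_cases hp : p ∈ P
  · rw [applySwaps_of_mem hp, applySwaps_succ_of_mem hp hsucc]
    exact hne.symm
  · rw [applySwaps_of_notMem hp hpred, applySwaps_of_notMem hsucc]
    · exact hne
    · intro q hq hqp
      exact hp (Nat.succ.inj hqp ▸ hq)

lemma applySwaps_symmDiff_applySwaps (h : ∀ p ∈ P ∪ P', p + 1 ∉ P ∪ P') (s : ℕ → α) :
    applySwaps (P ∆ P') (applySwaps P s) = applySwaps P' s := by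
  simp only [Finset.mem_union] at h
  funext i
  -- The swaps are disjoint, so both sides act on each swapped pair separately; on a pair swapped by
  -- `P`, the swap is in `P ∆ P'` exactly if it is not in `P'`.
  have hi := h i
  rcases i with _ | i
  · simp only [applySwaps, Finset.mem_symmDiff]
    grind
  · have hi' := h i
    simp only [applySwaps, Finset.mem_symmDiff]
    grind

lemma IsSwapSet.mono (hU : IsSwapSet n U) (hPU : P ⊆ U) : IsSwapSet n P :=
  ⟨fun p hp => hU.1 p (hPU hp), fun p hp hp' => hU.2 p (hPU hp) (hPU hp')⟩

lemma isSwapSet_of_forall_exists_mem {ι : Type*} {P : ι → Finset ℕ}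
    (hlt : ∀ i, ∀ p ∈ P i, p + 1 < n) (hdisj : ∀ i j, ∀ p ∈ P i, p + 1 ∉ P j)
    (hU : ∀ p ∈ U, ∃ i, p ∈ P i) : IsSwapSet n U := by
  refine ⟨fun p hp => ?_, fun p hp hp' => ?_⟩
  · obtain ⟨i, hi⟩ := hU p hp
    exact hlt i p hi
  · obtain ⟨i, hi⟩ := hU p hp
    obtain ⟨j, hj⟩ := hU (p + 1) hp'
    exact hdisj i j p hi hj

lemma ValidTransform.symmDiff (hP : ValidTransform n P r s) (hP' : ValidTransform n P' r t)
    (hU : IsSwapSet n (P ∪ P')) : ValidTransform n (P ∆ P') s t := by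
  have hsub : P ∆ P' ⊆ P ∪ P' := symmDiff_le_sup
  have hset : IsSwapSet n (P ∆ P') := hU.mono hsub
  refine ⟨⟨hset, fun i hi => ?_⟩, fun p hp => ?_⟩
  · calc applySwaps (P ∆ P') s i
        = applySwaps (P ∆ P') (applySwaps P r) i :=
          hset.applySwaps_congr (fun j hj => (hP.1.2 j hj).symm) hi
      _ = applySwaps P' r i := congrFun (applySwaps_symmDiff_applySwaps hU.2 r) i
      _ = t i := hP'.1.2 i hi
  · have hr : r p ≠ r (p + 1) := (Finset.mem_union.1 (hsub hp)).elim (hP.2 p) (hP'.2 p)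
    have hpn : p + 1 < n := hset.1 p hp
    rw [← hP.1.2 p (by omega), ← hP.1.2 (p + 1) hpn]
    refine applySwaps_ne_applySwaps_succ hr
      (fun h => hU.2 p (hsub hp) (Finset.mem_union_left _ h)) ?_
    rintro q hq rfl
    exact hU.2 q (Finset.mem_union_left _ hq) (hsub hp)

/-- The multiset of the first `q` letters of a string, the invariant that detects a swap across
the boundary between the positions `q - 1` and `q`. -/
def prefixMultiset (s : ℕ → α) (q : ℕ) : Multiset α :=
  (Multiset.range q).map s

lemma prefixMultiset_succ (s : ℕ → α) (q : ℕ) :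
    prefixMultiset s (q + 1) = s q ::ₘ prefixMultiset s q := by
  simp [prefixMultiset]

lemma prefixMultiset_congr {q : ℕ} (h : ∀ i < q, s i = t i) :
    prefixMultiset s q = prefixMultiset t q :=
  Multiset.map_congr rfl fun i hi => h i (Multiset.mem_range.1 hi)

lemma prefixMultiset_applySwaps (hP : ∀ p ∈ P, p + 1 ∉ P) (s : ℕ → α) (p : ℕ) :
    prefixMultiset (applySwaps P s) (p + 1) =
      if p ∈ P then s (p + 1) ::ₘ prefixMultiset s p else prefixMultiset s (p + 1) := by
  induction p with
  | zero => by_cases h : 0 ∈ P <;> simp [prefixMultiset, applySwaps, h]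
  | succ p ih =>
    rw [prefixMultiset_succ, ih]
    by_cases hp : p ∈ P
    · rw [if_pos hp, if_neg (hP p hp), applySwaps_succ_of_mem hp (hP p hp), Multiset.cons_swap,
        prefixMultiset_succ s (p + 1), prefixMultiset_succ s p]
    · rw [if_neg hp]
      by_cases hp' : p + 1 ∈ P
      · rw [if_pos hp', applySwaps_of_mem hp']
      · have hpred : ∀ q ∈ P, q + 1 ≠ p + 1 := by
          intro q hq hqp
          exact hp (Nat.succ.inj hqp ▸ hq)
        rw [if_neg hp', applySwaps_of_notMem hp' hpred, prefixMultiset_succ s (p + 1)]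

lemma Transforms.prefixMultiset_succ_eq_ite (h : Transforms n P s t) {p : ℕ} (hp : p < n) :
    prefixMultiset t (p + 1) =
      if p ∈ P then s (p + 1) ::ₘ prefixMultiset s p else prefixMultiset s (p + 1) := by
  rw [← prefixMultiset_applySwaps h.1.2 s p]
  exact prefixMultiset_congr fun i hi => (h.2 i (by omega)).symm

lemma Transforms.mem_of_prefixMultiset_ne (h : Transforms n P s t) {p : ℕ} (hp : p < n)
    (hne : prefixMultiset t (p + 1) ≠ prefixMultiset s (p + 1)) : p ∈ P := by
  by_contra hmem
  exact hne ((h.prefixMultiset_succ_eq_ite hp).trans (if_neg hmem))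

lemma ValidTransform.mem_iff_prefixMultiset_ne (h : ValidTransform n P s t) {p : ℕ} (hp : p < n) :
    p ∈ P ↔ prefixMultiset t (p + 1) ≠ prefixMultiset s (p + 1) := by
  refine ⟨fun hmem heq => h.2 p hmem ?_, h.1.mem_of_prefixMultiset_ne hp⟩
  rw [h.1.prefixMultiset_succ_eq_ite hp, if_pos hmem, prefixMultiset_succ] at heq
  exact ((Multiset.cons_inj_left _).1 heq).symm

open Classical in
/-- The swap string of `t` relative to `r`, the paper's `h_{r,t}`. Reading it off from the prefix
multisets makes it meaningful also for strings that do not match. -/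
noncomputable def swapString (r t : ℕ → α) : ℕ → Bool := fun p =>
  decide (prefixMultiset t (p + 1) ≠ prefixMultiset r (p + 1))

lemma ValidTransform.swapString_apply (h : ValidTransform n P r t) {p : ℕ} (hp : p < n) :
    swapString r t p = decide (p ∈ P) :=
  decide_eq_decide.2 (h.mem_iff_prefixMultiset_ne hp).symm

lemma Transforms.mem_of_swapString_ne (hQ : Transforms n Q s t) {p : ℕ} (hp : p < n)
    (hne : swapString r s p ≠ swapString r t p) : p ∈ Q := by
  refine hQ.mem_of_prefixMultiset_ne hp fun heq => hne ?_
  unfold swapString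
  rw [heq]

lemma ValidTransform.symmDiff_subset (hP : ValidTransform n P r s) (hP' : ValidTransform n P' r t)
    (hQ : Transforms n Q s t) : P ∆ P' ⊆ Q := by
  intro p hp
  have hpn : p < n := by
    rcases Finset.mem_symmDiff.1 hp with ⟨h, -⟩ | ⟨h, -⟩
    · exact Nat.lt_of_succ_lt (hP.1.1.1 p h)
    · exact Nat.lt_of_succ_lt (hP'.1.1.1 p h)
  refine hQ.mem_of_swapString_ne (r := r) hpn ?_
  rw [hP.swapString_apply hpn, hP'.swapString_apply hpn, ne_eq, decide_eq_decide]
  rw [Finset.mem_symmDiff] at hp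
  tauto

lemma ValidTransform.succ_notMem (hP : ValidTransform n P r s) (hP' : ValidTransform n P' r t)
    (hst : SwMatching n s t) {p : ℕ} (hp : p ∈ P) : p + 1 ∉ P' := by
  intro hp'
  obtain ⟨Q, hQ⟩ := hst
  have hsub : P ∆ P' ⊆ Q := hP.symmDiff_subset hP' hQ
  have hpQ : p ∈ Q := hsub (Finset.mem_symmDiff.2 (.inl ⟨hp, fun h => hP'.1.1.2 p h hp'⟩))
  have hp'Q : p + 1 ∈ Q := hsub (Finset.mem_symmDiff.2 (.inr ⟨hp', hP.1.1.2 p hp⟩))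
  exact hQ.1.2 p hpQ hp'Q

lemma ValidTransform.hamDist_swapString_le (hP : ValidTransform n P r s)
    (hQ : Transforms n Q s t) :
    hamDist (n - 1) (fun p => decide (p ∈ P)) (swapString r t) ≤ Q.card := by
  refine hamDist_le_card fun p hp hne => hQ.mem_of_swapString_ne (r := r) (by omega) ?_
  rwa [hP.swapString_apply (by omega)]

lemma card_symmDiff_le_hamDist {h : ℕ → Bool}
    (hh : ∀ p ∈ P ∪ P', p < n ∧ (p ∈ P' ↔ h p = true)) :
    (P ∆ P').card ≤ hamDist n (fun p => decide (p ∈ P)) h := by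
  refine card_le_hamDist fun p hp => ?_
  obtain ⟨hpn, hiff⟩ := hh p (symmDiff_le_sup (a := P) hp)
  refine ⟨hpn, ?_⟩
  rw [Finset.mem_symmDiff, hiff] at hp
  by_cases p ∈ P <;> simp_all

theorem radius_swap_iff_radius_hamming_general {ι : Type*} (n : ℕ) (r : ℕ → α)
    (s : ι → ℕ → α) (hpair : ∀ i j, SwMatching n (s i) (s j)) (d : ℕ) (P : ι → Finset ℕ)
    (hP : ∀ i, ValidTransform n (P i) r (s i)) :
    (∃ t : ℕ → α, ∀ i, swapDist n (s i) t ≤ (d : ℕ∞)) ↔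
      ∃ h : ℕ → Bool, ∀ i, hamDist (n - 1) (fun p => decide (p ∈ P i)) h ≤ d := by
  classical
  simp only [swapDist_le_iff]
  constructor
  · rintro ⟨t, ht⟩
    refine ⟨swapString r t, fun i => ?_⟩
    obtain ⟨Q, hQ, hcard⟩ := ht i
    exact ((hP i).hamDist_swapString_le hQ.1).trans hcard
  · rintro ⟨h, hh⟩
    let H : Finset ℕ := {p ∈ Finset.range (n - 1) | (∃ i, p ∈ P i) ∧ h p = true}
    have hPH : ∀ i, ∀ p ∈ P i ∪ H, ∃ j, p ∈ P j := fun i p hp =>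
      (Finset.mem_union.1 hp).elim (⟨i, ·⟩) fun hpH => (Finset.mem_filter.1 hpH).2.1
    have hPH_swap : ∀ i, IsSwapSet n (P i ∪ H) := fun i =>
      isSwapSet_of_forall_exists_mem (fun j => (hP j).1.1.1)
        (fun j k _ => (hP j).succ_notMem (hP k) (hpair j k)) (hPH i)
    refine ⟨applySwaps H r, fun i => ?_⟩
    have hH : ValidTransform n H r (applySwaps H r) :=
      ⟨⟨(hPH_swap i).mono Finset.subset_union_right, fun _ _ => rfl⟩, fun p hp =>
        have ⟨j, hj⟩ := hPH i p (Finset.mem_union_right _ hp)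
        (hP j).2 p hj⟩
    refine ⟨P i ∆ H, (hP i).symmDiff hH (hPH_swap i), le_trans ?_ (hh i)⟩
    refine card_symmDiff_le_hamDist fun p hp => ?_
    have hpn : p < n - 1 := Nat.lt_sub_of_add_lt ((hPH_swap i).1 p hp)
    exact ⟨hpn, by simp [H, hpn, hPH i p hp]⟩

end

/-- Let `S = {s 0, …, s (k-1)}` be pairwise matching strings of length
`n`, with `P i = π(s1, s i)` the valid swap permutation from `s1 = s 0` to `s i` (so the
swap string `h_{s1, s i}` is the indicator string of `P i`; for `i = 0` it is all-zero).
Then there is a length-`n` string `s*` with `∂S(s i, s*) ≤ d` for all `i` iff there is a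
binary string `h*` of length `n-1` with `∂Ham(h_{s1,s i}, h*) ≤ d` for all `i`. -/
theorem radius_swap_iff_radius_hamming {α : Type u} (n k : ℕ) (hk : 0 < k)
    (s : Fin k → ℕ → α)
    (hpair : ∀ i j, SwMatching n (s i) (s j))
    (d : ℕ) (P : Fin k → Finset ℕ)
    (hP : ∀ i, ValidTransform n (P i) (s ⟨0, hk⟩) (s i)) :
    (∃ sstar : ℕ → α, ∀ i, swapDist n (s i) sstar ≤ (d : ℕ∞)) ↔
    (∃ hstar : ℕ → Bool, ∀ i,
      hamDist (n - 1) (fun p => decide (p ∈ P i)) hstar ≤ d) :=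
  radius_swap_iff_radius_hamming_general n (s ⟨0, hk⟩) s hpair d P hP
end

section
/- For any three strings s1, s2, s3 of length n over Σ, the weakened triangle inequality holds: ∂SH(s1,s3) ≤ min{ 2·∂SH(s1,s2) + ∂SH(s2,s3), ∂SH(s1,s2) + 2·∂SH(s2,s3) }. -/
/-!
Strings of length `n` over an alphabet `α` are modelled as functions `ℕ → α`,
where only the values at positions `0, …, n-1` (0-indexed) are relevant.
A swap at (0-indexed) position `p` exchanges the letters at positions `p` and `p+1`.
A swap permutation is modelled as a `Finset ℕ` of swap positions, pairwise at
distance ≥ 2 (equivalently: containing no two consecutive positions).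
-/

universe u

variable {α : Type u}

/-!
A swap changes at most two letters, so it can be replaced by two substitutions: the Hamming distance
is at most twice the Swap+Hamming distance. Doing this to one of the two given distances leaves a
triangle inequality in which one leg is a Hamming distance, so no two swap sets have to be composed.
A Hamming leg on the right is appended to the substitutions of the other leg; one on the left is
moved past the swaps, since applying the same swaps to two strings preserves their Hamming distance.
-/

section Hamming

variable {β : Type*} {n : ℕ}

theorem hamDist_eq_hammingDist [DecidableEq β] (n : ℕ) (s t : ℕ → β) :
    hamDist n s t = hammingDist (fun i : Fin n => s i) (fun i : Fin n => t i) := by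
  simp only [hamDist, hammingDist, Finset.card_filter, Finset.sum_range]
  congr!

theorem hamDist_triangle (n : ℕ) (s t u : ℕ → β) :
    hamDist n s u ≤ hamDist n s t + hamDist n t u := by
  classical
  simpa only [hamDist_eq_hammingDist] using hammingDist_triangle _ _ _

theorem hamDist_congr_left {s s' : ℕ → β} (h : ∀ i < n, s i = s' i) (t : ℕ → β) :
    hamDist n s t = hamDist n s' t := by
  classical
  have hss' : (fun i : Fin n => s i) = fun i : Fin n => s' i := funext fun i => h i i.isLt
  rw [hamDist_eq_hammingDist, hamDist_eq_hammingDist, hss']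

theorem hamDist_le_card_s11 {s t : ℕ → β} {A : Finset ℕ} (h : ∀ i < n, s i ≠ t i → i ∈ A) :
    hamDist n s t ≤ A.card := by
  refine Finset.card_le_card fun i hi => ?_
  simp only [Finset.mem_filter, Finset.mem_range] at hi
  exact h i hi.1 hi.2

theorem hamDist_comp_of_involutive {σ : ℕ → ℕ} (hσ : Function.Involutive σ)
    (hlt : ∀ i < n, σ i < n) (s t : ℕ → β) :
    hamDist n (s ∘ σ) (t ∘ σ) = hamDist n s t := by
  refine Finset.card_nbij' σ σ ?_ ?_ (fun i _ => hσ i) (fun i _ => hσ i)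
  · simpa [Set.MapsTo] using fun i hi hne => And.intro (hlt i hi) hne
  · simpa [Set.MapsTo, hσ _] using fun i hi hne => And.intro (hlt i hi) hne

end Hamming

section Swaps

variable {n : ℕ} {P : Finset ℕ}

/-- The permutation of positions underlying a swap set `P`: the letter at position `i` after
performing the swaps in `P` comes from position `swapIndex P i`. -/
def swapIndex (P : Finset ℕ) (i : ℕ) : ℕ :=
  if i ∈ P then i + 1 else if 0 < i ∧ i - 1 ∈ P then i - 1 else i

theorem applySwaps_eq_comp_swapIndex (P : Finset ℕ) (s : ℕ → α) :
    applySwaps P s = s ∘ swapIndex P := by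
  funext i
  simp only [applySwaps, swapIndex, Function.comp_apply, apply_ite s]

theorem IsSwapSet.involutive_swapIndex (hP : IsSwapSet n P) :
    Function.Involutive (swapIndex P) := by
  intro i
  have hdisjoint := hP.2
  unfold swapIndex
  grind

theorem IsSwapSet.swapIndex_lt (hP : IsSwapSet n P) {i : ℕ} (hi : i < n) :
    swapIndex P i < n := by
  have hrange := hP.1
  unfold swapIndex
  grind

theorem IsSwapSet.mono_s11 {Q : Finset ℕ} (hP : IsSwapSet n P) (hQP : Q ⊆ P) : IsSwapSet n Q :=
  ⟨fun p hp => hP.1 p (hQP hp), fun p hp hp' => hP.2 p (hQP hp) (hQP hp')⟩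

theorem IsSwapSet.hamDist_applySwaps (hP : IsSwapSet n P) (s t : ℕ → α) :
    hamDist n (applySwaps P s) (applySwaps P t) = hamDist n s t := by
  simpa only [applySwaps_eq_comp_swapIndex] using
    hamDist_comp_of_involutive hP.involutive_swapIndex (fun _ => hP.swapIndex_lt) s t

theorem hamDist_self_applySwaps_le (n : ℕ) (P : Finset ℕ) (s : ℕ → α) :
    hamDist n s (applySwaps P s) ≤ 2 * P.card := by
  have hmoved : ∀ i < n, s i ≠ applySwaps P s i → i ∈ P ∪ P.image (· + 1) := by
    intro i _ hne
    unfold applySwaps at hne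
    grind
  calc hamDist n s (applySwaps P s)
      ≤ (P ∪ P.image (· + 1)).card := hamDist_le_card_s11 hmoved
    _ ≤ P.card + (P.image (· + 1)).card := Finset.card_union_le _ _
    _ ≤ 2 * P.card := by grw [Finset.card_image_le, two_mul]

theorem IsSwapSet.applySwaps_filter_ne (hP : IsSwapSet n P) (s : ℕ → α)
    [DecidablePred fun p => s p ≠ s (p + 1)] :
    applySwaps {p ∈ P | s p ≠ s (p + 1)} s = applySwaps P s := by
  funext i
  have hdisjoint := hP.2
  simp only [applySwaps, Finset.mem_filter]
  grind

theorem IsSwapSet.swapDist_applySwaps_le (hP : IsSwapSet n P) (s : ℕ → α) :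
    swapDist n s (applySwaps P s) ≤ P.card := by
  classical
  have hsub : {p ∈ P | s p ≠ s (p + 1)} ⊆ P := Finset.filter_subset _ _
  have hvalid : ValidTransform n {p ∈ P | s p ≠ s (p + 1)} s (applySwaps P s) :=
    ⟨⟨hP.mono_s11 hsub, fun i _ => congrFun (hP.applySwaps_filter_ne s) i⟩,
      fun p hp => (Finset.mem_filter.mp hp).2⟩
  calc swapDist n s (applySwaps P s)
      ≤ ({p ∈ P | s p ≠ s (p + 1)}.card : ℕ∞) := sInf_le ⟨_, hvalid, rfl⟩
    _ ≤ P.card := by exact_mod_cast Finset.card_le_card hsub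

end Swaps

theorem shDist_eq_iInf_isSwapSet (n : ℕ) (s t : ℕ → α) :
    shDist n s t =
      ⨅ (P : Finset ℕ) (_ : IsSwapSet n P), (P.card + hamDist n (applySwaps P s) t : ℕ∞) := by
  refine le_antisymm (le_iInf₂ fun P hP => ?_) (le_iInf fun u => ?_)
  · exact (iInf_le _ (applySwaps P s)).trans (by grw [hP.swapDist_applySwaps_le s])
  · rw [swapDist, ENat.sInf_add]
    refine le_iInf₂ ?_
    rintro _ ⟨P, ⟨⟨hP, hPu⟩, -⟩, rfl⟩
    rw [← hamDist_congr_left hPu t]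
    exact iInf₂_le P hP

theorem hamDist_le_two_mul_shDist (n : ℕ) (s t : ℕ → α) :
    (hamDist n s t : ℕ∞) ≤ 2 * shDist n s t := by
  simp only [shDist_eq_iInf_isSwapSet, ENat.mul_iInf_of_ne two_ne_zero]
  refine le_iInf₂ fun P _ => ?_
  have hP := hamDist_self_applySwaps_le n P s
  have htriangle := hamDist_triangle n s (applySwaps P s) t
  norm_cast
  lia

theorem shDist_le_shDist_add_hamDist (n : ℕ) (s t u : ℕ → α) :
    shDist n s u ≤ shDist n s t + hamDist n t u := by
  simp only [shDist, ENat.iInf_add]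
  refine iInf_mono fun v => ?_
  rw [add_assoc]
  gcongr
  exact_mod_cast hamDist_triangle n v t u

theorem shDist_le_hamDist_add_shDist (n : ℕ) (s t u : ℕ → α) :
    shDist n s u ≤ hamDist n s t + shDist n t u := by
  simp only [shDist_eq_iInf_isSwapSet, ENat.add_iInf₂]
  refine iInf₂_mono fun P hP => ?_
  have htriangle := hamDist_triangle n (applySwaps P s) (applySwaps P t) u
  rw [hP.hamDist_applySwaps s t] at htriangle
  norm_cast
  lia

/-- Weakened triangle inequality for the Swap+Hamming distance:
`∂SH(s1,s3) ≤ min { 2·∂SH(s1,s2) + ∂SH(s2,s3), ∂SH(s1,s2) + 2·∂SH(s2,s3) }`. -/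
theorem shDist_weak_triangle {α : Type u} (n : ℕ) (s1 s2 s3 : ℕ → α) :
    shDist n s1 s3 ≤
      min (2 * shDist n s1 s2 + shDist n s2 s3)
          (shDist n s1 s2 + 2 * shDist n s2 s3) := by
  refine le_min ?_ ?_
  · grw [shDist_le_hamDist_add_shDist n s1 s2 s3, hamDist_le_two_mul_shDist n s1 s2]
  · grw [shDist_le_shDist_add_hamDist n s1 s2 s3, hamDist_le_two_mul_shDist n s2 s3]
end
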